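/- Let E be a real normed vector space, let X ⊆ E, and let φ, ψ be nonnegative reals with φ ≤ ψ. Then the closing of X by radius φ is contained in the closing of X by radius ψ: ((X + D_φ)ᶜ + D_φ)ᶜ ⊆ ((X + D_ψ)ᶜ + D_ψ)ᶜ, where D_r = Metric.closedBall 0 r. -/

import Mathlib

open Metric Set Pointwise

/-- The morphological closing of `X` by the structuring element `B`: the complement of the dilation
by `B` of the complement of `X + B`. The second dilation does not reflect `B`, so this agrees with
the usual closing, an erosion of `X + B`, when `B = -B`. -/
def closing {G : Type*} [Add G] (X B : Set G) : Set G :=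
  ((X + B)ᶜ + B)ᶜ

theorem compl_sub_add_subset_compl {G : Type*} [AddGroup G] (Y D : Set G) :
    (Y - D)ᶜ + D ⊆ Yᶜ := by
  rintro _ ⟨z, hz, d, hd, rfl⟩ hzd
  exact hz ⟨z + d, hzd, d, hd, add_sub_cancel_right z d⟩

theorem closing_subset_closing_add {G : Type*} [AddCommGroup G] (X B : Set G) {D : Set G}
    (hD : -D = D) : closing X B ⊆ closing X (B + D) := by
  refine compl_subset_compl.mpr ?_
  calc (X + (B + D))ᶜ + (B + D)
      = ((X + B - D)ᶜ + D) + B := by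
        rw [sub_eq_add_neg, hD, ← add_assoc X, add_comm B, ← add_assoc]
    _ ⊆ (X + B)ᶜ + B := add_subset_add_right (compl_sub_add_subset_compl (X + B) D)

theorem closing_mono_radius_general {𝕜 E : Type*} [Field 𝕜] [LinearOrder 𝕜]
    [IsStrictOrderedRing 𝕜] [AddCommGroup E] [Module 𝕜 E] {K : Set E} (hK : Convex 𝕜 K)
    (hK_symm : -K = K) (X : Set E) {φ ψ : 𝕜} (hφ : 0 ≤ φ) (hφψ : φ ≤ ψ) :
    closing X (φ • K) ⊆ closing X (ψ • K) := by
  have hsplit : ψ • K = φ • K + (ψ - φ) • K := by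
    rw [← hK.add_smul hφ (sub_nonneg.mpr hφψ), add_sub_cancel]
  have hsymm : -((ψ - φ) • K) = (ψ - φ) • K := by
    rw [← smul_set_neg, hK_symm]
  rw [hsplit]
  exact closing_subset_closing_add X (φ • K) hsymm

theorem closing_mono_radius {E : Type*} [NormedAddCommGroup E] [NormedSpace ℝ E]
    (X : Set E) (φ ψ : ℝ) (hφ : 0 ≤ φ) (hψ : 0 ≤ ψ) (hφψ : φ ≤ ψ) :
    ((X + Metric.closedBall (0 : E) φ)ᶜ + Metric.closedBall (0 : E) φ)ᶜ ⊆
      ((X + Metric.closedBall (0 : E) ψ)ᶜ + Metric.closedBall (0 : E) ψ)ᶜ := by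
  rw [← smul_unitClosedBall_of_nonneg hφ, ← smul_unitClosedBall_of_nonneg hψ]
  have hsymm : -closedBall (0 : E) 1 = closedBall 0 1 := by
    rw [neg_closedBall, neg_zero]
  exact closing_mono_radius_general (convex_closedBall 0 1) hsymm X hφ hφψ
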